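/- Triviality of the global isotropy group: under the hypotheses that 𝕋₁, 𝕋₂ are equational theories over disjoint signatures each possessing a function symbol that is neither constant nor a projection, the group Aut(Id_{(𝕋₁+𝕋₂)mod}) of natural automorphisms of the identity functor on the category of (𝕋₁+𝕋₂)-models is the trivial group. -/

import Mathlib

/-- First-order terms over symbols `S` with arity `ar` and variables `V`. -/
inductive Tm (S : Type) (ar : S → ℕ) (V : Type) : Type
  | var : V → Tm S ar V
  | app : (f : S) → (Fin (ar f) → Tm S ar V) → Tm S ar V

namespace Tm
variable {S : Type} {ar : S → ℕ} {V W : Type}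

def mapVar (g : V → W) : Tm S ar V → Tm S ar W
  | var v => var (g v)
  | app f ts => app f (fun i => (ts i).mapVar g)

def bind : Tm S ar V → (V → Tm S ar W) → Tm S ar W
  | var v, g => g v
  | app f ts, g => app f (fun i => (ts i).bind g)

/-- All variables of a term belong to a given set. -/
def VarsIn : Tm S ar V → Set V → Prop
  | var v, A => v ∈ A
  | app _ ts, A => ∀ i, VarsIn (ts i) A

/-- The term contains at least one variable. -/
def HasVar : Tm S ar V → Prop
  | var _ => True
  | app _ ts => ∃ i, HasVar (ts i)

end Tm

/-- The combined signature: operation symbols of the two theories (`op`),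
generator constants `y₁,…,yₙ` (`gen`), and indeterminate constants `x = ind 0`,
`xᵢ = ind i` (`ind`). -/
inductive CSym (F : Bool → Type) (n : ℕ) : Type
  | op : (b : Bool) → F b → CSym F n
  | gen : Fin n → CSym F n
  | ind : ℕ → CSym F n

namespace CSym
variable {F : Bool → Type} {n : ℕ}

def arity (arF : ∀ b, F b → ℕ) : CSym F n → ℕ
  | op b f => arF b f
  | gen _ => 0
  | ind _ => 0

/-- Which of the four component signatures a symbol belongs to:
`0 = Σ₁`, `1 = Σ₂`, `2 = Σ₃`, `3 = Σ₄`. -/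
def sig : CSym F n → Fin 4
  | op false _ => 0
  | op true _ => 1
  | gen _ => 2
  | ind _ => 3

end CSym
section Setup

variable (F : Bool → Type) (arF : ∀ b, F b → ℕ) (n : ℕ)

/-- Closed terms over the combined signature `Σ = Σ₁ ∪ Σ₂ ∪ Σ₃ ∪ Σ₄`. -/
abbrev CT := Tm (CSym F n) (CSym.arity arF) Empty

/-- The root symbol of a closed term. -/
def rootSym : CT F arF n → CSym F n
  | .var v => v.elim
  | .app f _ => f

/-- All symbols of the closed term satisfy the predicate `P`. -/
def InSig (P : CSym F n → Prop) : CT F arF n → Prop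
  | .var v => v.elim
  | .app f ts => P f ∧ ∀ i, InSig P (ts i)

/-- A closed term is pure if all of its symbols belong to a single one of the
four component signatures. -/
def IsPure (t : CT F arF n) : Prop := ∃ k : Fin 4, InSig F arF n (fun s => s.sig = k) t

/-- The rank of a closed term: `0` if pure, and otherwise `1` plus the maximal
rank of its alien subterms. -/
def rank : CT F arF n → ℕ
  | .var v => v.elim
  | .app f ts =>
      Finset.univ.sup fun i =>
        rank (ts i) + (if (rootSym F arF n (ts i)).sig = f.sig then 0 else 1)

/-- The maximal subterms of `t` whose root is outside signature `k`. -/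
def aliensUnder (k : Fin 4) : CT F arF n → Set (CT F arF n)
  | .var v => v.elim
  | .app f ts =>
      if f.sig = k then ⋃ i, aliensUnder k (ts i) else {Tm.app f ts}

/-- The alien subterms of a closed term (relative to the signature of its root). -/
def aliensSet : CT F arF n → Set (CT F arF n)
  | .var v => v.elim
  | .app f ts => ⋃ i, aliensUnder F arF n f.sig (ts i)

/-- All alien subterms at arbitrary depth. -/
def allAliensSet : CT F arF n → Set (CT F arF n)
  | .var v => v.elim
  | .app f ts =>
      ⋃ i, (if (rootSym F arF n (ts i)).sig = f.sig then (∅ : Set _) else {ts i}) ∪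
        allAliensSet (ts i)

/-- View a closed combined term through the layer of theory `b`: keep the
top part built from `Σ_b`-symbols and regard the maximal non-`Σ_b`-rooted
subterms as opaque constants. -/
def layerize (b : Bool) : CT F arF n → Tm (F b) (arF b) (CT F arF n)
  | .app (.op b' f) ts =>
      if h : b' = b then h ▸ (Tm.app f (fun i => layerize b' (ts i)))
      else Tm.var (Tm.app (.op b' f) ts)
  | t => Tm.var t

end Setup
section Setup2

variable (F : Bool → Type) (arF : ∀ b, F b → ℕ) (n : ℕ)
variable (Ax : ∀ b, Set (Tm (F b) (arF b) ℕ × Tm (F b) (arF b) ℕ))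

mutual
/-- The isomorphism relation `≅` on closed combined terms, defined together
with the layer congruences: two terms are isomorphic iff their roots lie in the
same component signature and their alien abstractions are congruent modulo the
corresponding theory (for the constant signatures `Σ₃, Σ₄` this is syntactic
equality). -/
inductive Iso : CT F arF n → CT F arF n → Prop where
  | opEq (b : Bool) (u v : CT F arF n) :
      (∃ g : F b, rootSym F arF n u = .op b g) →
      (∃ g : F b, rootSym F arF n v = .op b g) →
      LEq b (layerize F arF n b u) (layerize F arF n b v) → Iso u v
  | constEq (t : CT F arF n) :
      ((rootSym F arF n t).sig = 2 ∨ (rootSym F arF n t).sig = 3) → Iso t t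

/-- The congruence `≈_b` on `Σ_b`-terms whose constants are closed combined
terms (representing their `≅`-classes): generated by the substitution instances
of the axioms of `𝕋_b` together with the identification of `≅`-related
constants. -/
inductive LEq : (b : Bool) →
    Tm (F b) (arF b) (CT F arF n) → Tm (F b) (arF b) (CT F arF n) → Prop where
  | refl (b) (t) : LEq b t t
  | symm {b s t} : LEq b s t → LEq b t s
  | trans {b s t u} : LEq b s t → LEq b t u → LEq b s u
  | congr (b) (g : F b) (ts us : Fin (arF b g) → Tm (F b) (arF b) (CT F arF n)) :
      (∀ i, LEq b (ts i) (us i)) → LEq b (.app g ts) (.app g us)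
  | varRel (b) (s t : CT F arF n) : Iso s t → LEq b (.var s) (.var t)
  | ax (b) (u v : Tm (F b) (arF b) ℕ) : (u, v) ∈ Ax b →
      ∀ σ : ℕ → Tm (F b) (arF b) (CT F arF n), LEq b (u.bind σ) (v.bind σ)
end

end Setup2
section Setup3

variable (F : Bool → Type) (arF : ∀ b, F b → ℕ) (n : ℕ)
variable (Ax : ∀ b, Set (Tm (F b) (arF b) ℕ × Tm (F b) (arF b) ℕ))

/-- The combined algebra `𝒜 = Term^c(Σ)/≅`. -/
abbrev Alg := Quot (Iso F arF n Ax)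

/-- Provable equality in the theory `𝕋_b` on terms with variables (equivalently
the smallest `Σ_b`-congruence containing all substitution instances of the
axioms of `𝕋_b`); with `V := Alg` this is the congruence `≈_b` on
`Term^c(Σ_b, Term^c(Σ)/≅)`. -/
inductive AxCong (b : Bool) {V : Type} : Tm (F b) (arF b) V → Tm (F b) (arF b) V → Prop where
  | refl (t) : AxCong b t t
  | symm {s t} : AxCong b s t → AxCong b t s
  | trans {s t u} : AxCong b s t → AxCong b t u → AxCong b s u
  | congr (g : F b) (ts us : Fin (arF b g) → Tm (F b) (arF b) V) :
      (∀ i, AxCong b (ts i) (us i)) → AxCong b (.app g ts) (.app g us)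
  | ax (u v : Tm (F b) (arF b) ℕ) : (u, v) ∈ Ax b →
      ∀ σ : ℕ → Tm (F b) (arF b) V, AxCong b (u.bind σ) (v.bind σ)

/-- Abstraction of alien subterms: `[t]ᵇ_≅ ∈ Term^c(Σ_b, Term^c(Σ)/≅)`. -/
def absQ (b : Bool) (t : CT F arF n) : Tm (F b) (arF b) (Alg F arF n Ax) :=
  (layerize F arF n b t).mapVar (Quot.mk _)

attribute [local instance] Classical.propDecidable

/-- The interpretation `t^𝒜` of a closed combined term in the combined algebra:
a term collapses to (the class of) an alien subterm whose class its alien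
abstraction is `≈_b`-congruent to, and is interpreted by its own class
otherwise. -/
noncomputable def interp : CT F arF n → Alg F arF n Ax
  | .app (.op b g) ts =>
      let t' : CT F arF n := .app (.op b g) (fun i => (interp (ts i)).out)
      if h : ∃ u, u ∈ aliensSet F arF n t' ∧
          AxCong F arF Ax b (absQ F arF n Ax b t') (.var (Quot.mk _ u))
      then Quot.mk _ h.choose
      else Quot.mk _ t'
  | t => Quot.mk _ t

end Setup3
section Setup4

variable (F : Bool → Type) (arF : ∀ b, F b → ℕ) (n : ℕ)
variable (Ax : ∀ b, Set (Tm (F b) (arF b) ℕ × Tm (F b) (arF b) ℕ))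

/-- Substitution of a closed term `w` for the indeterminate constant `x_j` in a
closed combined term. -/
def substInd (j : ℕ) (w : CT F arF n) : CT F arF n → CT F arF n
  | .var v => v.elim
  | .app (.ind j') ts => if j' = j then w else .app (.ind j') ts
  | .app f ts => .app f (fun i => substInd j w (ts i))

/-- The indeterminate constant `x_i` as a closed term (`x = xTm 0`). -/
def xTm (i : ℕ) : CT F arF n := .app (.ind i) Fin.elim0

/-- Replace every indeterminate constant occurring in a term by `x`. -/
def indToX : CT F arF n → CT F arF n
  | .var v => v.elim
  | .app (.ind _) _ => xTm F arF n 0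
  | .app f ts => .app f (fun i => indToX (ts i))

/-- Embedding of `Σ_b`-terms into combined terms. -/
def embedOp (b : Bool) {V : Type} : Tm (F b) (arF b) V → Tm (CSym F n) (CSym.arity arF) V
  | .var v => .var v
  | .app g ts => .app (.op b g) (fun i => embedOp b (ts i))

/-- Provable equality for the (combination of the) theories `𝕋_b` (`b ∈ B`) on
closed terms over the sub-signature of symbols satisfying `P`: the smallest
congruence on that set of closed terms containing all substitution instances
(by closed terms over the sub-signature) of the axioms. -/
inductive PE (B : Set Bool) (P : CSym F n → Prop) : CT F arF n → CT F arF n → Prop where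
  | refl (t) : InSig F arF n P t → PE B P t t
  | symm {s t} : PE B P s t → PE B P t s
  | trans {s t u} : PE B P s t → PE B P t u → PE B P s u
  | congr (f : CSym F n) (ts us : Fin (CSym.arity arF f) → CT F arF n) : P f →
      (∀ i, PE B P (ts i) (us i)) → PE B P (.app f ts) (.app f us)
  | ax (b : Bool) (hb : b ∈ B) (u v : Tm (F b) (arF b) ℕ) (h : (u, v) ∈ Ax b)
      (σ : ℕ → CT F arF n) : (∀ m, InSig F arF n P (σ m)) →
      PE B P ((embedOp F arF n b u).bind σ) ((embedOp F arF n b v).bind σ)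

/-- The sub-signature consisting of the operations of the theories in `B`, all
generator constants `y₁,…,yₙ`, and the indeterminates `x_j` with `j ∈ J`. -/
def SigP (B : Set Bool) (J : Set ℕ) : CSym F n → Prop
  | .op b _ => b ∈ B
  | .gen _ => True
  | .ind j => j ∈ J

/-- The (combination of the) theories in `B` is non-trivial: it does not prove
the equation `x = y` for distinct variables (equivalently, it does not identify
two distinct indeterminate constants). -/
def Nontriv (B : Set Bool) : Prop :=
  ¬ PE F arF n Ax B (SigP F n B Set.univ) (xTm F arF n 1) (xTm F arF n 2)

/-- Membership of (the class of) `t` in the logical isotropy group of the free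
model on `n` generators of the combination of the theories in `B`: `t` is a
closed term over the signature extended by the constant `x` that is invertible
under substitution into `x` and commutes generically with every operation. -/
def GIso (B : Set Bool) (t : CT F arF n) : Prop :=
  InSig F arF n (SigP F n B {0}) t ∧
  (∃ tinv, InSig F arF n (SigP F n B {0}) tinv ∧
    PE F arF n Ax B (SigP F n B {0}) (substInd F arF n 0 tinv t) (xTm F arF n 0) ∧
    PE F arF n Ax B (SigP F n B {0}) (substInd F arF n 0 t tinv) (xTm F arF n 0)) ∧
  ∀ b, b ∈ B → ∀ g : F b,
    PE F arF n Ax B (SigP F n B {j | 1 ≤ j ∧ j ≤ arF b g})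
      (substInd F arF n 0 (.app (.op b g) (fun i => xTm F arF n (i.val + 1))) t)
      (.app (.op b g) (fun i => substInd F arF n 0 (xTm F arF n (i.val + 1)) t))

/-- `g` is a projection in `𝕋_b`. -/
def IsProj (b : Bool) (g : F b) : Prop :=
  ∃ i : Fin (arF b g),
    AxCong F arF Ax b (V := ℕ) (.app g (fun j => .var j.val)) (.var i.val)

/-- `g` is constant in `𝕋_b`: `𝕋_b` proves `g(y₁,…,y_m) = s` for pairwise
distinct variables none of which occurs in `s`. -/
def IsConst (b : Bool) (g : F b) : Prop :=
  ∃ s : Tm (F b) (arF b) ℕ, s.VarsIn {m | arF b g ≤ m} ∧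
    AxCong F arF Ax b (V := ℕ) (.app g (fun j => .var j.val)) s

end Setup4
section Models

variable (F : Bool → Type) (arF : ∀ b, F b → ℕ) (n : ℕ)
variable (Ax : ∀ b, Set (Tm (F b) (arF b) ℕ × Tm (F b) (arF b) ℕ))

/-- Evaluation of a `Σ_b`-term in a set equipped with operations. -/
def evalTm {α : Type} (ops : ∀ b (g : F b), (Fin (arF b g) → α) → α)
    (b : Bool) {V : Type} (ρ : V → α) : Tm (F b) (arF b) V → α
  | .var v => ρ v
  | .app g ts => ops b g (fun i => evalTm ops b ρ (ts i))

/-- A (set-based) model of the combined theory `𝕋₁ + 𝕋₂`. -/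
structure TModel where
  carrier : Type
  ops : ∀ b (g : F b), (Fin (arF b g) → carrier) → carrier
  sat : ∀ b u v, (u, v) ∈ Ax b → ∀ ρ : ℕ → carrier,
      evalTm F arF ops b ρ u = evalTm F arF ops b ρ v

/-- Homomorphisms of models. -/
@[ext]
structure TModelHom (M N : TModel F arF Ax) where
  toFun : M.carrier → N.carrier
  map_ops : ∀ b (g : F b) (args : Fin (arF b g) → M.carrier),
      toFun (M.ops b g args) = N.ops b g (fun i => toFun (args i))

/-- The identity homomorphism. -/
def TModelHom.id (M : TModel F arF Ax) : TModelHom F arF Ax M M :=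
  ⟨fun a => a, fun _ _ _ => rfl⟩

/-- Composition of homomorphisms. -/
def TModelHom.comp {M M' M'' : TModel F arF Ax} (h' : TModelHom F arF Ax M' M'')
    (h : TModelHom F arF Ax M M') : TModelHom F arF Ax M M'' :=
  ⟨fun a => h'.toFun (h.toFun a), fun b g args => by
    simp [h.map_ops, h'.map_ops]⟩

/-- `M` together with the `n` elements `gens` is a free model on `n`
generators: the universal property. -/
def IsFreeOn (M : TModel F arF Ax) (gens : Fin n → M.carrier) : Prop :=
  ∀ (N : TModel F arF Ax) (a : Fin n → N.carrier),
    ∃! h : TModelHom F arF Ax M N, ∀ i, h.toFun (gens i) = a i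

end Models

/-!
Elements of the free model of `𝕋₁ + 𝕋₂` on the generators `x₀, x₁, …` have normal forms built from
alternating layers of `Σ₁`- and `Σ₂`-operations. An endomorphism `σ` coming from a natural family is
substitution into `t = σ x₀`: one has `σ c = t[c/x]`.

Suppose that `t` is not a generator, so that its top layer lies in some `Σ_b`. Take an operation `g`
of the other theory that is neither a projection nor constant, and let `c = g(x₀, …, x_{m-1})`.
Since `σ` is injective, `σ c = g(σ x₀, …, σ x_{m-1})` applies `g` to distinct elements rooted in
`Σ_b`, so it is rooted in the other signature and has more layers than `t`. But `c` has at most one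
layer, and substituting it into `t` creates an additional layer only if the result stays rooted in
`Σ_b`. Hence `t` is a generator, and substituting `c = x₀` shows that `σ x₀ = x₀`.
-/

namespace Tm

variable {S : Type} {ar : S → ℕ} {V W Z : Type}

/-- The set of variables occurring in a term. -/
def vars : Tm S ar V → Set V
  | var v => {v}
  | app _ ts => ⋃ i, (ts i).vars

theorem finite_vars (r : Tm S ar V) : r.vars.Finite := by
  induction r with
  | var v => exact Set.finite_singleton v
  | app f ts ih => exact Set.finite_iUnion ih

theorem varsIn_iff (r : Tm S ar V) (A : Set V) : r.VarsIn A ↔ r.vars ⊆ A := by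
  induction r with
  | var v => simp [VarsIn, vars]
  | app f ts ih => simp [VarsIn, vars, ih]

theorem vars_bind (r : Tm S ar V) (σ : V → Tm S ar W) :
    (r.bind σ).vars = ⋃ v ∈ r.vars, (σ v).vars := by
  induction r with
  | var v => simp [bind, vars]
  | app f ts ih => simp only [bind, vars, ih, Set.biUnion_iUnion]

theorem bind_congr {r : Tm S ar V} {σ τ : V → Tm S ar W} (h : ∀ v ∈ r.vars, σ v = τ v) :
    r.bind σ = r.bind τ := by
  induction r with
  | var v => exact h v rfl
  | app f ts ih =>
    exact congrArg (app f) (funext fun i => ih i fun v hv => h v (Set.mem_iUnion_of_mem i hv))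

theorem bind_var (r : Tm S ar V) : r.bind var = r := by
  induction r with
  | var v => rfl
  | app f ts ih => simp only [bind, ih]

theorem bind_bind (r : Tm S ar V) (σ : V → Tm S ar W) (τ : W → Tm S ar Z) :
    (r.bind σ).bind τ = r.bind fun v => (σ v).bind τ := by
  induction r with
  | var v => rfl
  | app f ts ih => simp only [bind, ih]

end Tm

namespace CombinedTheory

variable {F : Bool → Type} {arF : ∀ b, F b → ℕ}
variable {Ax : ∀ b, Set (Tm (F b) (arF b) ℕ × Tm (F b) (arF b) ℕ)}
variable {b : Bool} {V W : Type}

section Equational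

theorem evalTm_bind {α : Type} (ops : ∀ b (g : F b), (Fin (arF b g) → α) → α)
    (r : Tm (F b) (arF b) V) (σ : V → Tm (F b) (arF b) W) (ρ : W → α) :
    evalTm F arF ops b ρ (r.bind σ) =
      evalTm F arF ops b (fun v => evalTm F arF ops b ρ (σ v)) r := by
  induction r with
  | var v => rfl
  | app g ts ih => simp only [Tm.bind, evalTm, ih]

theorem axCong_bind {s t : Tm (F b) (arF b) V} (h : AxCong F arF Ax b s t)
    (τ : V → Tm (F b) (arF b) W) : AxCong F arF Ax b (s.bind τ) (t.bind τ) := by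
  induction h with
  | refl t => exact .refl _
  | symm _ ih => exact .symm ih
  | trans _ _ ih₁ ih₂ => exact .trans ih₁ ih₂
  | congr g ts us _ ih => exact .congr g _ _ ih
  | ax u v huv σ =>
    rw [Tm.bind_bind, Tm.bind_bind]
    exact .ax u v huv _

theorem evalTm_eq_of_axCong (M : TModel F arF Ax) {s t : Tm (F b) (arF b) V}
    (h : AxCong F arF Ax b s t) (ρ : V → M.carrier) :
    evalTm F arF M.ops b ρ s = evalTm F arF M.ops b ρ t := by
  induction h with
  | refl t => rfl
  | symm _ ih => exact ih.symm
  | trans _ _ ih₁ ih₂ => exact ih₁.trans ih₂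
  | congr g ts us _ ih => simp only [evalTm, ih]
  | ax u v huv σ =>
    rw [evalTm_bind, evalTm_bind]
    exact M.sat b u v huv _

variable (Ax b) in
/-- The theory `𝕋_b` is non-trivial: it proves no equation between distinct variables. Unlike
`Nontriv`, this concerns a single theory and terms over an arbitrary set of variables. -/
def SeparatesVars : Prop :=
  ∀ ⦃V : Type⦄ ⦃u v : V⦄, AxCong F arF Ax b (.var u) (.var v) → u = v

theorem separatesVars_of_not_isConst {g : F b} (hg : ¬ IsConst F arF Ax b g) :
    SeparatesVars Ax b := by
  classical
  intro V u v h
  by_contra hne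
  have hbind := axCong_bind h fun w =>
    if w = u then Tm.app g (fun j => .var j.val) else .var (arF b g)
  simp only [Tm.bind, if_true, if_neg (Ne.symm hne)] at hbind
  exact hg ⟨.var (arF b g), le_refl (arF b g), hbind⟩

theorem SeparatesVars.mem_vars (hsep : SeparatesVars Ax b) {v : V} {r : Tm (F b) (arF b) V}
    (h : AxCong F arF Ax b (.var v) r) : v ∈ r.vars := by
  classical
  by_contra hv
  have hfresh : (r.bind fun w => .var (decide (w = v))) = r.bind fun _ => .var false :=
    Tm.bind_congr fun w hw => by simp [ne_of_mem_of_not_mem hw hv]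
  have htrue := axCong_bind h fun w => .var (decide (w = v))
  have hfalse := axCong_bind h fun _ => .var false
  rw [hfresh] at htrue
  simpa using hsep (htrue.trans hfalse.symm)

-- Since the `a i` are distinct variables, they can be renamed to the variables `0, …, m - 1` used
-- by `IsProj` and `IsConst`, and all others to the variable `m`.
theorem exists_rename {g : F b} {a : Fin (arF b g) → V} (ha : Function.Injective a)
    {s : Tm (F b) (arF b) V} (h : AxCong F arF Ax b (.app g fun i => .var (a i)) s) :
    ∃ f : V → ℕ, (∀ i, f (a i) = i) ∧ (∀ v ∉ Set.range a, f v = arF b g) ∧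
      AxCong F arF Ax b (.app g fun i => .var i.val) (s.bind fun v => .var (f v)) := by
  let f := Function.extend a Fin.val fun _ => arF b g
  have hf : ∀ i, f (a i) = i := ha.extend_apply _ _
  refine ⟨f, hf, fun v hv => Function.extend_apply' _ _ _ hv, ?_⟩
  simpa only [Tm.bind, hf] using axCong_bind h fun v => .var (f v)

theorem exists_mem_vars_of_not_isConst {g : F b} (hg : ¬ IsConst F arF Ax b g)
    {a : Fin (arF b g) → V} (ha : Function.Injective a) {s : Tm (F b) (arF b) V}
    (h : AxCong F arF Ax b (.app g fun i => .var (a i)) s) : ∃ i, a i ∈ s.vars := by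
  obtain ⟨f, -, hf, hcong⟩ := exists_rename ha h
  by_contra! hs
  refine hg ⟨_, ?_, hcong⟩
  have hfs : ∀ v ∈ s.vars, f v = arF b g := fun v hv =>
    hf v (by rintro ⟨i, rfl⟩; exact hs i hv)
  simp +contextual [Tm.varsIn_iff, Tm.vars_bind, Tm.vars, hfs]

theorem isProj_of_axCong_var {g : F b} {a : Fin (arF b g) → V} (ha : Function.Injective a)
    {i : Fin (arF b g)} (h : AxCong F arF Ax b (.app g fun i => .var (a i)) (.var (a i))) :
    IsProj F arF Ax b g := by
  obtain ⟨f, hf, -, hcong⟩ := exists_rename ha h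
  exact ⟨i, by simpa only [Tm.bind, hf] using hcong⟩

end Equational

section NormalForm

variable [Inhabited V]

-- A variable of `s` absent from some congruent `r'` may be replaced by `default`; a representative
-- with the fewest variables besides `default` therefore has none.
theorem exists_axCong_vars_subset (r : Tm (F b) (arF b) V) :
    ∃ s, AxCong F arF Ax b s r ∧
      ∀ r', AxCong F arF Ax b r r' → s.vars ⊆ insert default r'.vars := by
  classical
  obtain ⟨s, hs, hmin⟩ := exists_minimalFor_of_wellFoundedLT
    (fun s => AxCong F arF Ax b s r) (fun s => (s.vars \ {default}).ncard) ⟨r, .refl r⟩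
  refine ⟨s, hs, fun r' hr' => ?_⟩
  let τ : V → Tm (F b) (arF b) V := fun v => if v ∈ r'.vars then .var v else .var default
  have hfix : r'.bind τ = r' :=
    (Tm.bind_congr fun v hv => if_pos hv).trans r'.bind_var
  have hcong : AxCong F arF Ax b (s.bind τ) r := by
    have hbind := axCong_bind (hs.trans hr') τ
    rw [hfix] at hbind
    exact hbind.trans hr'.symm
  have hvars : (s.bind τ).vars \ {default} ⊆ (s.vars \ {default}) ∩ r'.vars := by
    rintro w ⟨hw, hw₀⟩
    simp only [Tm.vars_bind, Set.mem_iUnion₂] at hw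
    obtain ⟨v, hv, hw⟩ := hw
    by_cases hvr : v ∈ r'.vars
    · rw [show τ v = .var v from if_pos hvr] at hw
      obtain rfl : w = v := hw
      exact ⟨⟨hv, hw₀⟩, hvr⟩
    · rw [show τ v = .var default from if_neg hvr] at hw
      exact absurd hw hw₀
  have hfin : (s.vars \ {default}).Finite := s.finite_vars.sdiff
  have hle : (s.vars \ {default}).ncard ≤ ((s.bind τ).vars \ {default}).ncard :=
    hmin hcong (Set.ncard_le_ncard (hvars.trans Set.inter_subset_left) hfin)
  have heq := Set.eq_of_subset_of_ncard_le (hvars.trans Set.inter_subset_left) hle hfin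
  rw [← Set.sdiff_singleton_subset_iff, ← heq]
  exact hvars.trans Set.inter_subset_right

variable (Ax b) in
/-- `s` is an admissible normal form of `r` modulo `𝕋_b`: it is congruent to `r`, it is a variable
whenever `r` is congruent to one, and it contains only variables on which `r` essentially depends.
The variable `default` is exempt because a class depending on no variable may still contain no
closed term. -/
structure IsNormalForm (r s : Tm (F b) (arF b) V) : Prop where
  axCong : AxCong F arF Ax b s r
  vars_subset : ∀ r', AxCong F arF Ax b r r' → s.vars ⊆ insert default r'.vars
  eq_var : ∀ v, AxCong F arF Ax b r (.var v) → s = .var v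

theorem IsNormalForm.congr {r r' : Tm (F b) (arF b) V} (h : AxCong F arF Ax b r r')
    {s : Tm (F b) (arF b) V} (hs : IsNormalForm Ax b r s) : IsNormalForm Ax b r' s :=
  ⟨hs.axCong.trans h, fun _ h' => hs.vars_subset _ (h.trans h'),
    fun _ h' => hs.eq_var _ (h.trans h')⟩

theorem SeparatesVars.exists_isNormalForm (hsep : SeparatesVars Ax b)
    (r : Tm (F b) (arF b) V) : ∃ s, IsNormalForm Ax b r s := by
  by_cases hvar : ∃ v, AxCong F arF Ax b r (.var v)
  · obtain ⟨v, hv⟩ := hvar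
    refine ⟨.var v, hv.symm, fun r' hr' => ?_, fun w hw => ?_⟩
    · exact Set.singleton_subset_iff.2 (.inr (hsep.mem_vars (hv.symm.trans hr')))
    · rw [hsep (hv.symm.trans hw)]
  · obtain ⟨s, hs, hvars⟩ := exists_axCong_vars_subset (Ax := Ax) r
    exact ⟨s, hs, hvars, fun v hv => absurd ⟨v, hv⟩ hvar⟩

variable (Ax b) in
/-- A choice of normal form modulo `𝕋_b` that depends only on the congruence class; meaningful only
when `𝕋_b` is non-trivial, as otherwise normal forms need not exist. -/
noncomputable def nf (r : Tm (F b) (arF b) V) : Tm (F b) (arF b) V :=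
  @Classical.epsilon _ ⟨.var default⟩ (IsNormalForm Ax b r)

theorem SeparatesVars.isNormalForm_nf (hsep : SeparatesVars Ax b) (r : Tm (F b) (arF b) V) :
    IsNormalForm Ax b r (nf Ax b r) :=
  Classical.epsilon_spec (hsep.exists_isNormalForm r)

theorem nf_eq_of_axCong {r r' : Tm (F b) (arF b) V} (h : AxCong F arF Ax b r r') :
    nf Ax b r = nf Ax b r' := by
  have : IsNormalForm Ax b r = IsNormalForm Ax b r' :=
    funext fun _ => propext ⟨.congr h, .congr h.symm⟩
  rw [nf, nf, this]

theorem SeparatesVars.nf_nf (hsep : SeparatesVars Ax b) (r : Tm (F b) (arF b) V) :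
    nf Ax b (nf Ax b r) = nf Ax b r :=
  nf_eq_of_axCong (hsep.isNormalForm_nf r).axCong

end NormalForm

section Layers

variable {n : ℕ}

/-- The theory to which the root symbol belongs, if it is not a constant of `Σ₃ ∪ Σ₄`. -/
def rootTheory : CT F arF n → Option Bool
  | .app (.op b _) _ => some b
  | _ => none

/-- The combined term whose `Σ_b`-layer, left inverse to `layerize`, is a given term over combined
terms. -/
def flatten (b : Bool) : Tm (F b) (arF b) (CT F arF n) → CT F arF n
  | .var u => u
  | .app g ts => .app (.op b g) fun i => flatten b (ts i)

theorem layerize_op (g : F b) (ts : Fin (arF b g) → CT F arF n) :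
    layerize F arF n b (.app (.op b g) ts) = .app g fun i => layerize F arF n b (ts i) := by
  simp [layerize]

theorem layerize_of_rootTheory_ne {u : CT F arF n} (h : rootTheory u ≠ some b) :
    layerize F arF n b u = .var u := by
  match u with
  | .app (.op b' g) ts => exact dif_neg fun hb => h (congrArg some hb)
  | .app (.gen _) _ => rfl
  | .app (.ind _) _ => rfl

theorem exists_eq_app_op {u : CT F arF n} (h : rootTheory u = some b) :
    ∃ (g : F b) (ts : Fin (arF b g) → CT F arF n), u = .app (.op b g) ts := by
  match u with
  | .app (.op b' g) ts =>
    obtain rfl : b' = b := Option.some.inj h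
    exact ⟨g, ts, rfl⟩

theorem flatten_layerize (b : Bool) (u : CT F arF n) :
    flatten b (layerize F arF n b u) = u := by
  induction u with
  | var v => exact v.elim
  | app f ts ih =>
    by_cases h : rootTheory (.app f ts) = some b
    · obtain ⟨g, us, hu⟩ := exists_eq_app_op h
      cases hu
      rw [layerize_op]
      exact congrArg (Tm.app _) (funext ih)
    · rw [layerize_of_rootTheory_ne h, flatten]

theorem layerize_flatten {r : Tm (F b) (arF b) (CT F arF n)}
    (h : ∀ v ∈ r.vars, rootTheory v ≠ some b) : layerize F arF n b (flatten b r) = r := by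
  induction r with
  | var u => exact layerize_of_rootTheory_ne (h u rfl)
  | app g ts ih =>
    exact (layerize_op g _).trans <| congrArg (Tm.app g) <| funext fun i =>
      ih i fun v hv => h v (Set.mem_iUnion_of_mem i hv)

theorem rootTheory_ne_of_mem_vars_layerize {u v : CT F arF n}
    (hv : v ∈ (layerize F arF n b u).vars) : rootTheory v ≠ some b := by
  induction u with
  | var w => exact w.elim
  | app f ts ih =>
    by_cases h : rootTheory (.app f ts) = some b
    · obtain ⟨g, us, hu⟩ := exists_eq_app_op h
      cases hu
      rw [layerize_op] at hv
      obtain ⟨i, hi⟩ := Set.mem_iUnion.1 hv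
      exact ih i hi
    · rw [layerize_of_rootTheory_ne h] at hv
      rwa [Set.mem_singleton_iff.1 hv]

/-- The number of nested layers of a combined term. In contrast to `rank`, the bottom constants do
not count as a layer, but a nullary operation does. -/
def height : CT F arF n → ℕ
  | .app (.op b _) ts =>
      max 1 (Finset.univ.sup fun i =>
        height (ts i) + if rootTheory (ts i) = some b then 0 else 1)
  | _ => 0

theorem height_add_ite_le_succ_iff (u : CT F arF n) (m : ℕ) :
    (height u + if rootTheory u = some b then 0 else 1) ≤ m + 1 ↔
      ∀ v ∈ (layerize F arF n b u).vars, height v ≤ m := by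
  induction u with
  | var w => exact w.elim
  | app f ts ih =>
    by_cases h : rootTheory (.app f ts) = some b
    · obtain ⟨g, us, hu⟩ := exists_eq_app_op h
      cases hu
      rw [if_pos h, layerize_op]
      simp only [height, Tm.vars, add_zero, max_le_iff, Finset.sup_le_iff, Finset.mem_univ,
        true_implies, Set.mem_iUnion, forall_exists_index, le_add_iff_nonneg_left, zero_le,
        true_and]
      rw [forall_comm]
      exact forall_congr' ih
    · simp [layerize_of_rootTheory_ne h, if_neg h, Tm.vars]

theorem height_le_succ_iff {u : CT F arF n} (hu : rootTheory u = some b) {m : ℕ} :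
    height u ≤ m + 1 ↔ ∀ v ∈ (layerize F arF n b u).vars, height v ≤ m := by
  simpa [hu] using height_add_ite_le_succ_iff (b := b) u m

theorem height_lt_of_mem_vars_layerize {u v : CT F arF n} (hu : rootTheory u = some b)
    (hv : v ∈ (layerize F arF n b u).vars) : height v < height u := by
  obtain ⟨g, ts, rfl⟩ := exists_eq_app_op hu
  have hpos : 1 ≤ height (.app (.op b g) ts : CT F arF n) := le_max_left _ _
  have := (height_le_succ_iff hu (m := height (.app (.op b g) ts : CT F arF n) - 1)).1
    (by omega) v hv
  omega

theorem height_flatten_le_or {r : Tm (F b) (arF b) (CT F arF n)} {m : ℕ}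
    (hroot : ∀ v ∈ r.vars, rootTheory v ≠ some b) (hm : ∀ v ∈ r.vars, height v ≤ m) :
    height (flatten b r) ≤ m ∨
      rootTheory (flatten b r) = some b ∧ height (flatten b r) ≤ m + 1 := by
  cases r with
  | var u => exact .inl (hm u rfl)
  | app g ts => exact .inr ⟨rfl, (height_le_succ_iff rfl).2 (by rwa [layerize_flatten hroot])⟩

end Layers

section FreeModel

instance : Inhabited (CT F arF 0) := ⟨xTm F arF 0 0⟩

theorem eq_xTm_of_rootTheory_eq_none {u : CT F arF 0} (h : rootTheory u = none) :
    ∃ i, u = xTm F arF 0 i := by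
  match u with
  | .app (.op b g) ts => exact absurd h (Option.some_ne_none b)
  | .app (.gen i) _ => exact i.elim0
  | .app (.ind i) ts => exact ⟨i, congrArg (Tm.app (CSym.ind i)) (funext fun j => j.elim0)⟩

variable (Ax) in
/-- Hereditarily normal combined terms: every layer, at any depth, is the chosen normal form of its
congruence class. They represent the elements of the free model on the generators `xTm i`. -/
inductive IsNormal : CT F arF 0 → Prop
  | xTm (i : ℕ) : IsNormal (xTm F arF 0 i)
  | layer (b : Bool) (u : CT F arF 0) : rootTheory u = some b →
      nf Ax b (layerize F arF 0 b u) = layerize F arF 0 b u →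
      (∀ v ∈ (layerize F arF 0 b u).vars, IsNormal v) → IsNormal u

variable (Ax b) in
/-- A `Σ_b`-term over combined terms that can serve as the top layer of a hereditarily normal
combined term, except that it need not itself be in normal form. -/
def IsLayer (r : Tm (F b) (arF b) (CT F arF 0)) : Prop :=
  ∀ v ∈ r.vars, IsNormal Ax v ∧ rootTheory v ≠ some b

theorem IsNormal.isLayer_layerize {u : CT F arF 0} (hu : IsNormal Ax u) (b : Bool) :
    IsLayer Ax b (layerize F arF 0 b u) := by
  refine fun v hv => ⟨?_, rootTheory_ne_of_mem_vars_layerize hv⟩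
  by_cases h : rootTheory u = some b
  · cases hu with
    | xTm i => cases h
    | layer b' _ h' _ hvars =>
      obtain rfl : b' = b := Option.some.inj (h'.symm.trans h)
      exact hvars v hv
  · rw [layerize_of_rootTheory_ne h] at hv
    rwa [Set.mem_singleton_iff.1 hv]

theorem isLayer_bind_layerize {ρ : V → CT F arF 0} (hρ : ∀ v, IsNormal Ax (ρ v))
    (r : Tm (F b) (arF b) V) : IsLayer Ax b (r.bind fun v => layerize F arF 0 b (ρ v)) := by
  intro w hw
  simp only [Tm.vars_bind, Set.mem_iUnion₂] at hw
  obtain ⟨v, -, hw⟩ := hw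
  exact (hρ v).isLayer_layerize b w hw

theorem SeparatesVars.nf_layerize (hsep : SeparatesVars Ax b) {u : CT F arF 0}
    (hu : IsNormal Ax u) : nf Ax b (layerize F arF 0 b u) = layerize F arF 0 b u := by
  by_cases h : rootTheory u = some b
  · cases hu with
    | xTm i => cases h
    | layer b' _ h' hnf _ =>
      obtain rfl : b' = b := Option.some.inj (h'.symm.trans h)
      exact hnf
  · rw [layerize_of_rootTheory_ne h]
    exact (hsep.isNormalForm_nf _).eq_var u (.refl _)

theorem IsLayer.nf (hsep : SeparatesVars Ax b) {r : Tm (F b) (arF b) (CT F arF 0)}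
    (hr : IsLayer Ax b r) : IsLayer Ax b (nf Ax b r) := by
  intro v hv
  rcases (hsep.isNormalForm_nf r).vars_subset r (.refl r) hv with rfl | hv
  · exact ⟨.xTm 0, nofun⟩
  · exact hr v hv

theorem IsLayer.layerize_flatten {r : Tm (F b) (arF b) (CT F arF 0)} (hr : IsLayer Ax b r) :
    layerize F arF 0 b (flatten b r) = r :=
  CombinedTheory.layerize_flatten fun v hv => (hr v hv).2

theorem IsLayer.isNormal_flatten {r : Tm (F b) (arF b) (CT F arF 0)} (hr : IsLayer Ax b r)
    (hnf : CombinedTheory.nf Ax b r = r) : IsNormal Ax (flatten b r) := by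
  cases r with
  | var u => exact (hr u rfl).1
  | app g ts =>
    refine .layer b _ rfl ?_ ?_ <;> rw [hr.layerize_flatten]
    · exact hnf
    · exact fun v hv => (hr v hv).1

variable (hsep : ∀ b, SeparatesVars Ax b)

/-- The operations of the free model: apply the symbol, then normalize the top layer. -/
noncomputable def freeOp (b : Bool) (g : F b) (a : Fin (arF b g) → {u // IsNormal Ax u}) :
    {u // IsNormal Ax u} :=
  ⟨flatten b (nf Ax b (.app g fun i => layerize F arF 0 b (a i).1)),
    ((isLayer_bind_layerize (fun i => (a i).2) (.app g .var)).nf (hsep b)).isNormal_flatten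
      ((hsep b).nf_nf _)⟩

theorem evalTm_freeOp (ρ : V → {u // IsNormal Ax u}) (r : Tm (F b) (arF b) V) :
    (evalTm F arF (freeOp hsep) b ρ r).1 =
      flatten b (nf Ax b (r.bind fun v => layerize F arF 0 b (ρ v).1)) := by
  induction r with
  | var v =>
    rw [Tm.bind, (hsep b).nf_layerize (ρ v).2, flatten_layerize]
    rfl
  | app g ts ih =>
    simp only [evalTm, Tm.bind, freeOp, ih]
    refine congrArg (flatten b) (nf_eq_of_axCong (.congr g _ _ fun i => ?_))
    have hlayer := isLayer_bind_layerize (fun v => (ρ v).2) (ts i)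
    rw [(hlayer.nf (hsep b)).layerize_flatten]
    exact ((hsep b).isNormalForm_nf _).axCong

/-- The free model of `𝕋₁ + 𝕋₂` on countably many generators. -/
noncomputable def freeModel : TModel F arF Ax where
  carrier := {u // IsNormal Ax u}
  ops := freeOp hsep
  sat b u v huv ρ := Subtype.ext <| by
    rw [evalTm_freeOp, evalTm_freeOp]
    exact congrArg (flatten b) (nf_eq_of_axCong (.ax u v huv _))

/-- The free generators of `freeModel`. -/
noncomputable def freeGen (i : ℕ) : (freeModel hsep).carrier :=
  ⟨xTm F arF 0 i, .xTm i⟩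

theorem freeGen_injective : Function.Injective (freeGen hsep) := by
  intro i j h
  have hroot := congrArg (rootSym F arF 0) (congrArg Subtype.val h)
  exact CSym.ind.inj hroot

/-- Evaluation of a combined term in a model, the indeterminates `x_i` being sent to `ρ i`. -/
def evalCT (M : TModel F arF Ax) (ρ : ℕ → M.carrier) : CT F arF 0 → M.carrier
  | .var v => v.elim
  | .app (.op b g) ts => M.ops b g fun i => evalCT M ρ (ts i)
  | .app (.gen i) _ => i.elim0
  | .app (.ind i) _ => ρ i

theorem evalCT_flatten (M : TModel F arF Ax) (ρ : ℕ → M.carrier)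
    (r : Tm (F b) (arF b) (CT F arF 0)) :
    evalCT M ρ (flatten b r) = evalTm F arF M.ops b (evalCT M ρ) r := by
  induction r with
  | var u => rfl
  | app g ts ih => exact congrArg (M.ops b g) (funext ih)

theorem evalCT_eq_evalTm_layerize (M : TModel F arF Ax) (ρ : ℕ → M.carrier) (b : Bool)
    (u : CT F arF 0) :
    evalCT M ρ u = evalTm F arF M.ops b (evalCT M ρ) (layerize F arF 0 b u) := by
  rw [← evalCT_flatten, flatten_layerize]

/-- The homomorphism out of the free model with prescribed values on the generators. -/
noncomputable def freeLift (M : TModel F arF Ax) (ρ : ℕ → M.carrier) :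
    TModelHom F arF Ax (freeModel hsep) M where
  toFun u := evalCT M ρ u.1
  map_ops b g a := by
    change evalCT M ρ (flatten b (nf Ax b _)) = _
    rw [evalCT_flatten, evalTm_eq_of_axCong M ((hsep b).isNormalForm_nf _).axCong]
    exact congrArg (M.ops b g) (funext fun i => (evalCT_eq_evalTm_layerize M ρ b (a i).1).symm)

end FreeModel

section Height

variable (hsep : ∀ b, SeparatesVars Ax b)

theorem height_evalTm_freeModel {ρ : V → (freeModel hsep).carrier} {m : ℕ}
    {r : Tm (F b) (arF b) V} (hρ : ∀ v ∈ r.vars, height (ρ v).1 ≤ m) :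
    height (evalTm F arF (freeModel hsep).ops b ρ r).1 ≤ m ∨
      rootTheory (evalTm F arF (freeModel hsep).ops b ρ r).1 = some b ∧
        height (evalTm F arF (freeModel hsep).ops b ρ r).1 ≤ m + 1 := by
  set s := r.bind fun v => layerize F arF 0 b (ρ v).1
  have heval : (evalTm F arF (freeModel hsep).ops b ρ r).1 = flatten b (nf Ax b s) :=
    evalTm_freeOp hsep ρ r
  have hlayer : IsLayer Ax b (nf Ax b s) := (isLayer_bind_layerize (fun v => (ρ v).2) r).nf (hsep b)
  rw [heval]
  refine height_flatten_le_or (fun w hw => (hlayer w hw).2) fun w hw => ?_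
  rcases ((hsep b).isNormalForm_nf s).vars_subset s (.refl s) hw with rfl | hw
  · exact Nat.zero_le m
  · simp only [s, Tm.vars_bind, Set.mem_iUnion₂] at hw
    obtain ⟨v, hv, hw⟩ := hw
    refine le_trans ?_ (hρ v hv)
    by_cases h : rootTheory (ρ v).1 = some b
    · exact (height_lt_of_mem_vars_layerize h hw).le
    · rw [layerize_of_rootTheory_ne h] at hw
      rw [Set.mem_singleton_iff.1 hw]

variable {ρ : ℕ → (freeModel hsep).carrier} {m : ℕ}

theorem height_evalCT_lt_or {u : CT F arF 0} (hu : rootTheory u = some b)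
    (h : ∀ v ∈ (layerize F arF 0 b u).vars,
      height (evalCT (freeModel hsep) ρ v).1 ≤ height v + m) :
    height (evalCT (freeModel hsep) ρ u).1 < height u + m ∨
      rootTheory (evalCT (freeModel hsep) ρ u).1 = some b ∧
        height (evalCT (freeModel hsep) ρ u).1 ≤ height u + m := by
  obtain ⟨k, hk⟩ : ∃ k, height u = k + 1 := by
    obtain ⟨g, ts, rfl⟩ := exists_eq_app_op hu
    exact Nat.exists_eq_add_of_le' (le_max_left _ _)
  have hvars : ∀ v ∈ (layerize F arF 0 b u).vars,
      height (evalCT (freeModel hsep) ρ v).1 ≤ k + m := fun v hv =>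
    (h v hv).trans (Nat.add_le_add_right ((height_le_succ_iff hu).1 hk.le v hv) m)
  rw [evalCT_eq_evalTm_layerize _ _ b, hk, Nat.add_right_comm, Nat.lt_succ_iff]
  exact height_evalTm_freeModel hsep hvars

theorem height_evalCT_le (hρ : ∀ i, height (ρ i).1 ≤ m) (u : CT F arF 0) :
    height (evalCT (freeModel hsep) ρ u).1 ≤ height u + m := by
  induction hk : height u using Nat.strong_induction_on generalizing u with
  | _ k ih =>
    subst hk
    cases hu : rootTheory u with
    | none =>
      obtain ⟨i, rfl⟩ := eq_xTm_of_rootTheory_eq_none hu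
      exact (hρ i).trans (Nat.le_add_left _ _)
    | some b =>
      rcases height_evalCT_lt_or hsep hu fun v hv =>
        ih _ (height_lt_of_mem_vars_layerize hu hv) v rfl with h | h
      · exact h.le
      · exact h.2

theorem height_evalCT_lt_or_rootTheory_eq (hρ : ∀ i, height (ρ i).1 ≤ m) {u : CT F arF 0}
    (hu : rootTheory u = some b) :
    height (evalCT (freeModel hsep) ρ u).1 < height u + m ∨
      rootTheory (evalCT (freeModel hsep) ρ u).1 = some b :=
  (height_evalCT_lt_or hsep hu fun v _ => height_evalCT_le hsep hρ v).imp_right And.left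

theorem freeModel_ops_of_injective {g : F b} (hproj : ¬ IsProj F arF Ax b g)
    (hconst : ¬ IsConst F arF Ax b g) {a : Fin (arF b g) → (freeModel hsep).carrier}
    (ha : Function.Injective a) (hroot : ∀ i, rootTheory (a i).1 ≠ some b) :
    rootTheory ((freeModel hsep).ops b g a).1 = some b ∧
      ∃ i, height (a i).1 < height ((freeModel hsep).ops b g a).1 := by
  set r : Tm (F b) (arF b) (CT F arF 0) := .app g fun i => .var (a i).1
  have hops : ((freeModel hsep).ops b g a).1 = flatten b (nf Ax b r) := by
    have : (fun i => layerize F arF 0 b (a i).1) = fun i => .var (a i).1 :=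
      funext fun i => layerize_of_rootTheory_ne (hroot i)
    exact congrArg (fun ts => flatten b (nf Ax b (.app g ts))) this
  have hr : IsLayer Ax b r := by
    intro v hv
    obtain ⟨i, rfl⟩ := Set.mem_iUnion.1 hv
    exact ⟨(a i).2, hroot i⟩
  have hinj : Function.Injective fun i => (a i).1 := Subtype.val_injective.comp ha
  have hcong : AxCong F arF Ax b r (nf Ax b r) := ((hsep b).isNormalForm_nf r).axCong.symm
  have hlayer : layerize F arF 0 b (flatten b (nf Ax b r)) = nf Ax b r :=
    (hr.nf (hsep b)).layerize_flatten
  obtain ⟨i, hi⟩ := exists_mem_vars_of_not_isConst hconst hinj hcong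
  have hrootOp : rootTheory (flatten b (nf Ax b r)) = some b := by
    cases hs : nf Ax b r with
    | var u =>
      rw [hs] at hcong hi
      obtain rfl : (a i).1 = u := hi
      exact absurd (isProj_of_axCong_var hinj hcong) hproj
    | app g' ts => rfl
  rw [hops]
  exact ⟨hrootOp, i, height_lt_of_mem_vars_layerize hrootOp (by rwa [hlayer])⟩

end Height

section Endomorphism

variable {hsep : ∀ b, SeparatesVars Ax b}

-- With `t = σ (x₀)`, the hypothesis `hσ` reads `σ c = t[c/x]`.
theorem rootTheory_eq_none_of_substitution
    (hyp : ∀ b, ∃ g : F b, ¬ IsProj F arF Ax b g ∧ ¬ IsConst F arF Ax b g)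
    {σ : TModelHom F arF Ax (freeModel hsep) (freeModel hsep)}
    (hinj : Function.Injective σ.toFun)
    (hσ : ∀ i c, evalCT (freeModel hsep) (fun _ => c) (σ.toFun (freeGen hsep i)).1 = σ.toFun c) :
    rootTheory (σ.toFun (freeGen hsep 0)).1 = none := by
  by_contra hne
  obtain ⟨b, hb⟩ := Option.ne_none_iff_exists'.1 hne
  let t : ℕ → (freeModel hsep).carrier := fun i => σ.toFun (freeGen hsep i)
  have htσ : ∀ i c, evalCT (freeModel hsep) (fun _ => c) (t i).1 = σ.toFun c := hσ
  have hgen : ∀ i, height (freeGen hsep i).1 ≤ 0 := fun _ => le_rfl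
  have hheight : ∀ i j, height (t i).1 ≤ height (t j).1 := fun i j => by
    have := height_evalCT_le hsep (fun _ => hgen i) (t j).1
    rwa [htσ] at this
  have hroot : ∀ i, rootTheory (t i).1 = some b := fun i => by
    have := height_evalCT_lt_or_rootTheory_eq hsep (fun _ => hgen i) hb
    rw [hσ] at this
    exact this.resolve_left (hheight 0 i).not_gt
  obtain ⟨g, hproj, hconst⟩ := hyp !b
  set c := (freeModel hsep).ops (!b) g fun i => freeGen hsep i
  have hc : height c.1 ≤ 1 := by
    rcases height_evalTm_freeModel hsep (ρ := freeGen hsep)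
      (r := .app g fun i => .var i.val) (fun v _ => hgen v) with h | h
    · exact h.trans zero_le_one
    · exact h.2
  have hσc : σ.toFun c = (freeModel hsep).ops (!b) g fun i => t i := σ.map_ops _ _ _
  have ht : Function.Injective fun i : Fin (arF (!b) g) => t i :=
    (hinj.comp (freeGen_injective hsep)).comp Fin.val_injective
  obtain ⟨hrootc, i, hi⟩ := freeModel_ops_of_injective hsep hproj hconst ht
    fun i => by simp [hroot]
  have hsubst := height_evalCT_lt_or_rootTheory_eq hsep (fun _ => hc) hb
  rw [hσ, hσc, hrootc] at hsubst
  rcases hsubst with h | h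
  · exact absurd (hi.trans_le (Nat.lt_succ_iff.1 h)) (hheight 0 i).not_gt
  · simp at h

theorem fixes_generator_of_substitution
    (hyp : ∀ b, ∃ g : F b, ¬ IsProj F arF Ax b g ∧ ¬ IsConst F arF Ax b g)
    {σ : TModelHom F arF Ax (freeModel hsep) (freeModel hsep)}
    (hinj : Function.Injective σ.toFun)
    (hσ : ∀ i c, evalCT (freeModel hsep) (fun _ => c) (σ.toFun (freeGen hsep i)).1 = σ.toFun c) :
    σ.toFun (freeGen hsep 0) = freeGen hsep 0 := by
  obtain ⟨j, hj⟩ :=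
    eq_xTm_of_rootTheory_eq_none (rootTheory_eq_none_of_substitution hyp hinj hσ)
  rw [← hσ 0, hj]
  rfl

end Endomorphism

end CombinedTheory

theorem global_isotropy_trivial_general {F : Bool → Type} {arF : ∀ b, F b → ℕ}
    {Ax : ∀ b, Set (Tm (F b) (arF b) ℕ × Tm (F b) (arF b) ℕ)}
    (hyp : ∀ b, ∃ g : F b, ¬ IsProj F arF Ax b g ∧ ¬ IsConst F arF Ax b g)
    (η : ∀ M : TModel F arF Ax, TModelHom F arF Ax M M)
    (hnat : ∀ (M N : TModel F arF Ax) (h : TModelHom F arF Ax M N),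
      TModelHom.comp F arF Ax h (η M) = TModelHom.comp F arF Ax (η N) h)
    (hinj : ∀ M, Function.Injective (η M).toFun) (M : TModel F arF Ax) :
    η M = TModelHom.id F arF Ax M := by
  have hsep : ∀ b, CombinedTheory.SeparatesVars Ax b := fun b =>
    let ⟨_, _, hconst⟩ := hyp b
    CombinedTheory.separatesVars_of_not_isConst hconst
  set N := CombinedTheory.freeModel hsep
  have hlift : ∀ (M : TModel F arF Ax) (i : ℕ) (a : M.carrier),
      CombinedTheory.evalCT M (fun _ => a) ((η N).toFun (CombinedTheory.freeGen hsep i)).1 =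
        (η M).toFun a := fun M i a =>
    congrFun (congrArg TModelHom.toFun (hnat N M (CombinedTheory.freeLift hsep M fun _ => a)))
      (CombinedTheory.freeGen hsep i)
  have hfix := CombinedTheory.fixes_generator_of_substitution hyp (hinj N) (hlift N)
  ext a
  rw [← hlift M 0 a, hfix]
  rfl

section Statement
variable (F : Bool → Type) (arF : ∀ b, F b → ℕ) (n : ℕ)
variable (Ax : ∀ b, Set (Tm (F b) (arF b) ℕ × Tm (F b) (arF b) ℕ))

/-- Triviality of the global isotropy group: under the hypotheses of the main
theorem, every natural automorphism of the identity functor on the category of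
`(𝕋₁+𝕋₂)`-models is the identity. -/
theorem global_isotropy_trivial
    (hyp : ∀ b, ∃ g : F b, 1 ≤ arF b g ∧ ¬ IsProj F arF Ax b g ∧ ¬ IsConst F arF Ax b g) :
    ∀ η : ∀ M : TModel F arF Ax, TModelHom F arF Ax M M,
      (∀ (M N : TModel F arF Ax) (h : TModelHom F arF Ax M N),
        TModelHom.comp F arF Ax h (η M) = TModelHom.comp F arF Ax (η N) h) →
      (∀ M, Function.Bijective (η M).toFun) →
      ∀ M, η M = TModelHom.id F arF Ax M := by
  intro η hnat hbij
  exact global_isotropy_trivial_general (fun b => (hyp b).imp fun _ => And.right) η hnat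
    fun M => (hbij M).injective
end Statement
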